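/- Let J(x) = x·tanh x, J'(ξ) = tanh ξ + ξ(1 − tanh²ξ), Λ(ξ) = J'(ξ)² − 4J(ξ), and for ξ ≠ 0, η ≠ 0, ξ+η ≠ 0 set ζ = −(ξ+η), Ω = J(ξ)² + J(η)² + J(ζ)² − 2J(ξ)J(η) − 2J(η)J(ζ) − 2J(ζ)J(ξ), B^h(ξ,η) = −2iζ·J(ξ)·J(η)/Ω and C^h(ξ,η) = −iξηζ·(J(ζ) − J(ξ) − J(η))/Ω. Then for every fixed real ξ ≠ 0, as η → 0 through values with η ≠ 0 and ξ + η ≠ 0, one has B^h(ξ,η) → 2iξ·J(ξ)/Λ(ξ) and C^h(ξ,η) → iξ²·J'(ξ)/Λ(ξ). -/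

import Mathlib

open Filter Topology

noncomputable def J (x : ℝ) : ℝ := x * Real.tanh x

noncomputable def J' (ξ : ℝ) : ℝ := Real.tanh ξ + ξ * (1 - Real.tanh ξ ^ 2)

noncomputable def Λ (ξ : ℝ) : ℝ := J' ξ ^ 2 - 4 * J ξ

noncomputable def Ω (ξ η ζ : ℝ) : ℝ :=
  J ξ ^ 2 + J η ^ 2 + J ζ ^ 2 - 2 * J ξ * J η - 2 * J η * J ζ - 2 * J ζ * J ξ

noncomputable def Bh (ξ η : ℝ) : ℂ :=
  -2 * Complex.I * ((-(ξ + η) : ℝ) : ℂ) * (J ξ : ℂ) * (J η : ℂ) /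
    ((Ω ξ η (-(ξ + η)) : ℝ) : ℂ)

noncomputable def Ch (ξ η : ℝ) : ℂ :=
  -Complex.I * (ξ : ℂ) * (η : ℂ) * ((-(ξ + η) : ℝ) : ℂ) *
      ((J (-(ξ + η)) - J ξ - J η : ℝ) : ℂ) /
    ((Ω ξ η (-(ξ + η)) : ℝ) : ℂ)

/-!
Completing the square, `Ω = (J ζ - J ξ - J η) ^ 2 - 4 J ξ J η`. As `η → 0`, `J` being even with
`J η ~ η ^ 2`, the two terms are equivalent to `J' ξ ^ 2 η ^ 2` and `4 J ξ η ^ 2`, so that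
`Ω / η ^ 2 → Λ ξ`; dividing the numerators of `B^h` and `C^h` by `η ^ 2` as well gives the limits.
The limit `Λ ξ` is nonzero: for `ξ > 0` one has `0 < J' ξ < 2 tanh ξ` and `tanh ξ ≤ ξ`, hence
`J' ξ ^ 2 < 4 tanh ξ ^ 2 ≤ 4 J ξ`, and `Λ` is even.
-/

theorem one_sub_tanh_sq (x : ℝ) : 1 - Real.tanh x ^ 2 = 1 / Real.cosh x ^ 2 := by
  have hcosh : Real.cosh x ≠ 0 := (Real.cosh_pos x).ne'
  rw [Real.tanh_eq_sinh_div_cosh]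
  field_simp
  exact sub_eq_of_eq_add' (Real.cosh_sq x)

theorem hasDerivAt_tanh (x : ℝ) : HasDerivAt Real.tanh (1 - Real.tanh x ^ 2) x := by
  have hquot := (Real.hasDerivAt_sinh x).fun_div (Real.hasDerivAt_cosh x) (Real.cosh_pos x).ne'
  simp only [← Real.tanh_eq_sinh_div_cosh] at hquot
  refine hquot.congr_deriv ?_
  rw [one_sub_tanh_sq, ← sq, ← sq, Real.cosh_sq, add_sub_cancel_left]

theorem tanh_pos {x : ℝ} (hx : 0 < x) : 0 < Real.tanh x := by
  rw [Real.tanh_eq_sinh_div_cosh]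
  exact div_pos (Real.sinh_pos_iff.2 hx) (Real.cosh_pos x)

theorem tanh_le_self {x : ℝ} (hx : 0 ≤ x) : Real.tanh x ≤ x := by
  have hderiv : ∀ y, deriv Real.tanh y ≤ 1 := fun y => by
    rw [(hasDerivAt_tanh y).deriv]
    exact sub_le_self 1 (sq_nonneg _)
  simpa using
    image_sub_le_mul_sub_of_deriv_le (fun y => (hasDerivAt_tanh y).differentiableAt) hderiv hx

theorem self_mul_one_sub_tanh_sq_lt_tanh {x : ℝ} (hx : 0 < x) :
    x * (1 - Real.tanh x ^ 2) < Real.tanh x := by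
  have hlt : x < Real.sinh x * Real.cosh x :=
    (Real.self_lt_sinh_iff.2 hx).trans_le
      (le_mul_of_one_le_right (Real.sinh_nonneg_iff.2 hx.le) (Real.one_le_cosh x))
  calc x * (1 - Real.tanh x ^ 2) = x / Real.cosh x ^ 2 := by rw [one_sub_tanh_sq, mul_one_div]
    _ < Real.sinh x * Real.cosh x / Real.cosh x ^ 2 := by gcongr
    _ = Real.tanh x := by rw [Real.tanh_eq_sinh_div_cosh]; field_simp

theorem J_neg (x : ℝ) : J (-x) = J x := by
  rw [J, J, Real.tanh_neg, neg_mul_neg]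

theorem J'_neg (x : ℝ) : J' (-x) = -J' x := by
  simp only [J', Real.tanh_neg]
  ring

theorem Λ_neg (x : ℝ) : Λ (-x) = Λ x := by
  rw [Λ, Λ, J_neg, J'_neg, neg_sq]

theorem J'_pos {x : ℝ} (hx : 0 < x) : 0 < J' x :=
  add_pos (tanh_pos hx) (mul_pos hx (sub_pos.2 (Real.tanh_sq_lt_one x)))

theorem J'_lt_two_mul_tanh {x : ℝ} (hx : 0 < x) : J' x < 2 * Real.tanh x := by
  rw [J', two_mul]
  gcongr
  exact self_mul_one_sub_tanh_sq_lt_tanh hx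

theorem J'_sq_lt_four_mul_J {x : ℝ} (hx : 0 < x) : J' x ^ 2 < 4 * J x := by
  have hJ' : 0 ≤ J' x := (J'_pos hx).le
  have htanh : 0 ≤ Real.tanh x := (tanh_pos hx).le
  calc J' x ^ 2 < (2 * Real.tanh x) ^ 2 := by gcongr; exact J'_lt_two_mul_tanh hx
    _ = 4 * (Real.tanh x * Real.tanh x) := by ring
    _ ≤ 4 * (x * Real.tanh x) := by gcongr; exact tanh_le_self hx.le

theorem Λ_lt_zero {x : ℝ} (hx : x ≠ 0) : Λ x < 0 := by
  rcases hx.lt_or_gt with hneg | hpos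
  · rw [← Λ_neg]
    exact sub_neg.2 (J'_sq_lt_four_mul_J (neg_pos.2 hneg))
  · exact sub_neg.2 (J'_sq_lt_four_mul_J hpos)

theorem hasDerivAt_J (x : ℝ) : HasDerivAt J (J' x) x :=
  ((hasDerivAt_id' x).fun_mul (hasDerivAt_tanh x)).congr_deriv (by rw [one_mul, J'])

theorem tendsto_J_div_sq : Tendsto (fun η => J η / η ^ 2) (𝓝[≠] 0) (𝓝 1) := by
  have hslope : Tendsto (fun η => η⁻¹ * Real.tanh η) (𝓝[≠] 0) (𝓝 1) := by
    simpa using (hasDerivAt_tanh 0).tendsto_slope_zero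
  refine hslope.congr' ?_
  filter_upwards [self_mem_nhdsWithin] with η (hη : η ≠ 0)
  rw [J]
  field_simp

theorem tendsto_inv_smul_map_add_sub_map_sub_map {𝕜 E : Type*} [NontriviallyNormedField 𝕜]
    [NormedAddCommGroup E] [NormedSpace 𝕜 E] {f : 𝕜 → E} {a b : E} {x : 𝕜}
    (hx : HasDerivAt f a x) (h₀ : HasDerivAt f b 0) (hf₀ : f 0 = 0) :
    Tendsto (fun h => h⁻¹ • (f (x + h) - f x - f h)) (𝓝[≠] 0) (𝓝 (a - b)) := by
  simpa only [zero_add, hf₀, sub_zero, ← smul_sub] using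
    hx.tendsto_slope_zero.sub h₀.tendsto_slope_zero

theorem tendsto_J_sub_J_sub_J_div (ξ : ℝ) :
    Tendsto (fun η => (J (-(ξ + η)) - J ξ - J η) / η) (𝓝[≠] 0) (𝓝 (J' ξ)) := by
  have hJ₀ : J 0 = 0 := zero_mul _
  have hJ'₀ : J' 0 = 0 := by simp [J']
  simpa only [J_neg, hJ'₀, sub_zero, smul_eq_mul, inv_mul_eq_div] using
    tendsto_inv_smul_map_add_sub_map_sub_map (hasDerivAt_J ξ) (hasDerivAt_J 0) hJ₀

theorem Ω_eq_sq_sub (ξ η ζ : ℝ) : Ω ξ η ζ = (J ζ - J ξ - J η) ^ 2 - 4 * J ξ * J η := by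
  rw [Ω]
  ring

theorem tendsto_Ω_div_sq (ξ : ℝ) :
    Tendsto (fun η => Ω ξ η (-(ξ + η)) / η ^ 2) (𝓝[≠] 0) (𝓝 (Λ ξ)) := by
  have hΩ (η : ℝ) : Ω ξ η (-(ξ + η)) / η ^ 2 =
      ((J (-(ξ + η)) - J ξ - J η) / η) ^ 2 - 4 * J ξ * (J η / η ^ 2) := by
    rw [Ω_eq_sq_sub, sub_div, div_pow, mul_div_assoc]
  simpa only [hΩ, Λ, mul_one] using
    ((tendsto_J_sub_J_sub_J_div ξ).pow 2).sub (tendsto_J_div_sq.const_mul (4 * J ξ))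

theorem tendsto_neg_const_add {G : Type*} [AddGroup G] [TopologicalSpace G]
    [IsTopologicalAddGroup G] (x : G) : Tendsto (fun h => -(x + h)) (𝓝[≠] 0) (𝓝 (-x)) := by
  have hcont : Continuous fun h => -(x + h) := by fun_prop
  simpa only [add_zero] using (hcont.tendsto 0).mono_left nhdsWithin_le_nhds

theorem Bh_eq_div_sq (ξ : ℝ) {η : ℝ} (hη : η ≠ 0) :
    Bh ξ η = -2 * Complex.I * ((-(ξ + η) : ℝ) : ℂ) * (J ξ : ℂ) * ((J η / η ^ 2 : ℝ) : ℂ) /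
      ((Ω ξ η (-(ξ + η)) / η ^ 2 : ℝ) : ℂ) := by
  have hη' : (η : ℂ) ^ 2 ≠ 0 := by exact_mod_cast pow_ne_zero 2 hη
  rw [Bh, Complex.ofReal_div, Complex.ofReal_div, Complex.ofReal_pow, mul_div_assoc',
    div_div_div_cancel_right₀ hη']

theorem Ch_eq_div_sq (ξ : ℝ) {η : ℝ} (hη : η ≠ 0) :
    Ch ξ η = -Complex.I * (ξ : ℂ) * ((-(ξ + η) : ℝ) : ℂ) *
        (((J (-(ξ + η)) - J ξ - J η) / η : ℝ) : ℂ) /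
      ((Ω ξ η (-(ξ + η)) / η ^ 2 : ℝ) : ℂ) := by
  have hη' : (η : ℂ) ≠ 0 := by exact_mod_cast hη
  rw [Ch, Complex.ofReal_div, Complex.ofReal_div, Complex.ofReal_pow]
  field_simp

theorem tendsto_Bh {ξ : ℝ} (hΛ : Λ ξ ≠ 0) :
    Tendsto (Bh ξ) (𝓝[≠] 0) (𝓝 (2 * Complex.I * (ξ : ℂ) * (J ξ : ℂ) / (Λ ξ : ℂ))) := by
  have hnum := (((tendsto_neg_const_add ξ).ofReal.const_mul (-2 * Complex.I)).mul_const
    (J ξ : ℂ)).mul tendsto_J_div_sq.ofReal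
  have hlim := hnum.div (tendsto_Ω_div_sq ξ).ofReal (Complex.ofReal_ne_zero.2 hΛ)
  have hvalue : -2 * Complex.I * ((-ξ : ℝ) : ℂ) * (J ξ : ℂ) * ((1 : ℝ) : ℂ) =
      2 * Complex.I * (ξ : ℂ) * (J ξ : ℂ) := by
    push_cast
    ring
  rw [hvalue] at hlim
  refine hlim.congr' ?_
  filter_upwards [self_mem_nhdsWithin] with η hη using (Bh_eq_div_sq ξ hη).symm

theorem tendsto_Ch {ξ : ℝ} (hΛ : Λ ξ ≠ 0) :
    Tendsto (Ch ξ) (𝓝[≠] 0) (𝓝 (Complex.I * (ξ : ℂ) ^ 2 * (J' ξ : ℂ) / (Λ ξ : ℂ))) := by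
  have hnum := ((tendsto_neg_const_add ξ).ofReal.const_mul (-Complex.I * (ξ : ℂ))).mul
    (tendsto_J_sub_J_sub_J_div ξ).ofReal
  have hlim := hnum.div (tendsto_Ω_div_sq ξ).ofReal (Complex.ofReal_ne_zero.2 hΛ)
  have hvalue : -Complex.I * (ξ : ℂ) * ((-ξ : ℝ) : ℂ) * (J' ξ : ℂ) =
      Complex.I * (ξ : ℂ) ^ 2 * (J' ξ : ℂ) := by
    push_cast
    ring
  rw [hvalue] at hlim
  refine hlim.congr' ?_
  filter_upwards [self_mem_nhdsWithin] with η hη using (Ch_eq_div_sq ξ hη).symm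

/-- Boundary values of the holomorphic normal-form symbols `B^h`, `C^h` on the
line `η = 0`. -/
theorem Bh_Ch_limits_eta_zero (ξ : ℝ) (hξ : ξ ≠ 0) :
    Tendsto (fun η : ℝ => Bh ξ η) (𝓝[{η : ℝ | η ≠ 0 ∧ ξ + η ≠ 0}] (0 : ℝ))
        (𝓝 (2 * Complex.I * (ξ : ℂ) * (J ξ : ℂ) / ((Λ ξ : ℝ) : ℂ))) ∧
      Tendsto (fun η : ℝ => Ch ξ η) (𝓝[{η : ℝ | η ≠ 0 ∧ ξ + η ≠ 0}] (0 : ℝ))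
        (𝓝 (Complex.I * (ξ : ℂ) ^ 2 * (J' ξ : ℂ) / ((Λ ξ : ℝ) : ℂ))) := by
  have hΛ : Λ ξ ≠ 0 := (Λ_lt_zero hξ).ne
  have hle : 𝓝[{η : ℝ | η ≠ 0 ∧ ξ + η ≠ 0}] (0 : ℝ) ≤ 𝓝[≠] 0 :=
    nhdsWithin_mono 0 fun _ hη => hη.1
  exact ⟨(tendsto_Bh hΛ).mono_left hle, (tendsto_Ch hΛ).mono_left hle⟩
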